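/- In a canonical intersection-link representation of a cluster C of size k >= 3, walking along the boundary of the union of the unit squares of C, k-2 of the vertices appear exactly twice, forming two maximal sequences that occur in opposite orders, and these two sequences are separated by the two remaining vertices, each of which appears exactly once along the boundary. Consequently, such a cluster can be modeled in a PolyLink representation as a polygon with four sides in which one pair of antipodal sides carries the k-2 doubly-appearing vertices and the other two sides each carry one of the two remaining vertices. -/

import Mathlib

namespace Paper

/-! ### PolyLink representations -/

/-- The planar cross product. -/
def cross2 (a b : ℝ × ℝ) : ℝ := a.1 * b.2 - a.2 * b.1

/-- `corner` (with indices taken mod `σ`) lists the corners of a convex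
polygon in clockwise order: for every side, all other corners lie strictly on
its right. -/
def ConvexCW (corner : ℕ → ℝ × ℝ) (σ : ℕ) : Prop :=
  ∀ i < σ, ∀ j < σ, j ≠ i → j ≠ (i + 1) % σ →
    cross2 (corner ((i + 1) % σ) - corner i) (corner j - corner i) < 0

/-- The point at parameter `t ∈ (0,1)` on the side from corner `i` to corner
`i+1` of the polygon with corner list `corner` and `σ` sides. -/
noncomputable def sidePt (corner : ℕ → ℝ × ℝ) (σ : ℕ) (i : ℕ) (t : ℝ) : ℝ × ℝ :=
  (1 - t) • corner (i % σ) + t • corner ((i + 1) % σ)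

/-- The closed region of the polygon. -/
noncomputable def polyRegion (corner : ℕ → ℝ × ℝ) (σ : ℕ) : Set (ℝ × ℝ) :=
  convexHull ℝ (corner '' {i | i < σ})

/-- Well-formedness of a PolyLink input with fixed sides: all polygons have an
even number (at least four) of sides, every vertex is associated with a pair of
antipodal sides `(pairOf v, pairOf v + σ/2)` of the polygon of its cluster, and
the specified side of every inter-cluster edge end is one of, the two sides
associated with the corresponding endpoint. -/
def PolyLinkInputWF {V K : Type} (G : SimpleGraph V) (clu : V → K)
    (nsides : K → ℕ) (pairOf : V → ℕ) (sides : V × V → ℕ) : Prop :=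
  (∀ k, 4 ≤ nsides k ∧ Even (nsides k)) ∧
  (∀ v, 2 * pairOf v < nsides (clu v)) ∧
  (∀ u w, G.Adj u w → clu u ≠ clu w →
    sides (u, w) = pairOf u ∨ sides (u, w) = pairOf u + nsides (clu u) / 2)

/-- The data of a PolyLink representation: the polygon corners of every
cluster, the positions (side parameters) of the two copies of every vertex on
its two antipodal sides (`false`: side `pairOf v`; `true`: the antipodal side),
and a curve for every directed inter-cluster edge. -/
structure PolyLinkRep (V K : Type) where
  corner : K → ℕ → ℝ × ℝ
  par : V → Bool → ℝ
  curve : V × V → ℝ → ℝ × ℝ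

namespace PolyLinkRep

variable {V K : Type}

/-- The attachment point of the end `u` of the inter-cluster edge `(u, w)`:
the copy of `u` lying on the specified side `sides (u, w)`. -/
noncomputable def attach (R : PolyLinkRep V K) (clu : V → K) (nsides : K → ℕ)
    (pairOf : V → ℕ) (sides : V × V → ℕ) (u w : V) : ℝ × ℝ :=
  sidePt (R.corner (clu u)) (nsides (clu u)) (sides (u, w))
    (if sides (u, w) = pairOf u then R.par u false else R.par u true)

/-- Validity of a PolyLink representation (fixed sides): polygons are convex,
pairwise disjoint, with clockwise corner order; the copies of the vertices of
a common side pair lie in its interiors, distinct vertices at distinct points,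
and the two copies of the vertices appear in opposite orders on the two
antipodal sides; every inter-cluster edge is a simple curve between the
specified copies of its endpoints avoiding all polygons, and no two
inter-cluster edges cross. -/
def IsValid (G : SimpleGraph V) (clu : V → K) (nsides : K → ℕ)
    (pairOf : V → ℕ) (sides : V × V → ℕ) (R : PolyLinkRep V K) : Prop :=
  (∀ k, ConvexCW (R.corner k) (nsides k)) ∧
  (∀ k k', k ≠ k' →
    Disjoint (polyRegion (R.corner k) (nsides k))
      (polyRegion (R.corner k') (nsides k'))) ∧
  (∀ v b, R.par v b ∈ Set.Ioo (0 : ℝ) 1) ∧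
  (∀ u v, u ≠ v → clu u = clu v → pairOf u = pairOf v →
    ∀ b, R.par u b ≠ R.par v b) ∧
  (∀ u v, clu u = clu v → pairOf u = pairOf v →
    (R.par u false < R.par v false ↔ R.par v true < R.par u true)) ∧
  (∀ u w : V, G.Adj u w → clu u ≠ clu w →
    ContinuousOn (R.curve (u, w)) (Set.Icc 0 1) ∧
    Set.InjOn (R.curve (u, w)) (Set.Icc 0 1) ∧
    R.curve (u, w) 0 = R.attach clu nsides pairOf sides u w ∧
    R.curve (u, w) 1 = R.attach clu nsides pairOf sides w u ∧
    (∀ t, R.curve (w, u) t = R.curve (u, w) (1 - t)) ∧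
    (∀ t ∈ Set.Ioo (0 : ℝ) 1, ∀ k,
      R.curve (u, w) t ∉ polyRegion (R.corner k) (nsides k))) ∧
  (∀ u w u' w', G.Adj u w → clu u ≠ clu w → G.Adj u' w' → clu u' ≠ clu w' →
    ¬(u = u' ∧ w = w') → ¬(u = w' ∧ w = u') →
    Disjoint (R.curve (u, w) '' Set.Ioo 0 1) (R.curve (u', w') '' Set.Ioo 0 1))

end PolyLinkRep

/-- PolyLink planarity with fixed sides: the flat clustered graph admits a
planar PolyLink representation. -/
def PolyLinkPlanar {V K : Type} (G : SimpleGraph V) (clu : V → K)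
    (nsides : K → ℕ) (pairOf : V → ℕ) (sides : V × V → ℕ) : Prop :=
  ∃ R : PolyLinkRep V K, R.IsValid G clu nsides pairOf sides

end Paper

namespace Paper

/-! ### Canonical intersection-link representations and clique planarity -/

/-- The closed unit square with upper-left corner `p`. -/
def ulSq (p : ℝ × ℝ) : Set (ℝ × ℝ) :=
  Set.Icc p.1 (p.1 + 1) ×ˢ Set.Icc (p.2 - 1) p.2

/-- The side `s` (`0`=top, `1`=right, `2`=bottom, `3`=left) of the unit square
with upper-left corner `p`. -/
def ulSide (p : ℝ × ℝ) (s : Fin 4) : Set (ℝ × ℝ) :=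
  if s = 0 then Set.Icc p.1 (p.1 + 1) ×ˢ ({p.2} : Set ℝ)
  else if s = 1 then ({p.1 + 1} : Set ℝ) ×ˢ Set.Icc (p.2 - 1) p.2
  else if s = 2 then Set.Icc p.1 (p.1 + 1) ×ˢ ({p.2 - 1} : Set ℝ)
  else ({p.1} : Set ℝ) ×ˢ Set.Icc (p.2 - 1) p.2

/-- The data of a canonical intersection-link representation: every vertex is
a unit square whose upper-left corner is at offset `off v` along a line of
slope one through the base point of its cluster; every directed inter-cluster
edge has an attachment point and a curve. -/
structure CanonicalRep (V K : Type) where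
  base : K → ℝ × ℝ
  off : V → ℝ
  attachPt : V × V → ℝ × ℝ
  curve : V × V → ℝ → ℝ × ℝ

namespace CanonicalRep

variable {V K : Type}

/-- The upper-left corner of the unit square of `v`. -/
def ul (R : CanonicalRep V K) (clu : V → K) (v : V) : ℝ × ℝ :=
  ((R.base (clu v)).1 + R.off v, (R.base (clu v)).2 + R.off v)

/-- The unit square of `v`. -/
def vsq (R : CanonicalRep V K) (clu : V → K) (v : V) : Set (ℝ × ℝ) :=
  ulSq (R.ul clu v)

/-- Validity of a canonical intersection-link representation with fixed sides:
two unit squares overlap iff there is an intra-cluster edge between their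
vertices; every inter-cluster edge is a simple curve attached at the specified
sides of the squares of its endpoints, avoiding all squares, and no two
inter-cluster edges cross. -/
def IsValid (G : SimpleGraph V) (clu : V → K) (sides : V × V → Fin 4)
    (R : CanonicalRep V K) : Prop :=
  (∀ u v : V, u ≠ v →
    ((interior (R.vsq clu u) ∩ interior (R.vsq clu v)).Nonempty ↔
      (G.Adj u v ∧ clu u = clu v))) ∧
  (∀ u w : V, G.Adj u w → clu u ≠ clu w →
    R.attachPt (u, w) ∈ ulSide (R.ul clu u) (sides (u, w)) ∧
    (∀ v, v ≠ u → R.attachPt (u, w) ∉ interior (R.vsq clu v)) ∧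
    ContinuousOn (R.curve (u, w)) (Set.Icc 0 1) ∧
    Set.InjOn (R.curve (u, w)) (Set.Icc 0 1) ∧
    R.curve (u, w) 0 = R.attachPt (u, w) ∧
    R.curve (u, w) 1 = R.attachPt (w, u) ∧
    (∀ t, R.curve (w, u) t = R.curve (u, w) (1 - t)) ∧
    (∀ t ∈ Set.Ioo (0 : ℝ) 1, ∀ v, R.curve (u, w) t ∉ R.vsq clu v)) ∧
  (∀ u w u' w', G.Adj u w → clu u ≠ clu w → G.Adj u' w' → clu u' ≠ clu w' →
    ¬(u = u' ∧ w = w') → ¬(u = w' ∧ w = u') →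
    Disjoint (R.curve (u, w) '' Set.Ioo 0 1) (R.curve (u', w') '' Set.Ioo 0 1))

end CanonicalRep

/-- Clique planarity with fixed sides: the flat clustered graph (whose clusters
are cliques) admits a canonical intersection-link representation with no two
inter-cluster edges crossing, respecting the specified sides. -/
def CliquePlanarFS {V K : Type} (G : SimpleGraph V) (clu : V → K)
    (sides : V × V → Fin 4) : Prop :=
  ∃ R : CanonicalRep V K, R.IsValid G clu sides

/-! ### Boundary orders (for canonical cluster representations) -/

/-- The boundary set `Bd` decomposes, along a periodic simple parameterization,
into consecutive arcs lying on the pieces `piece (l i)`, in the cyclic order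
given by the list `l`. -/
def BoundaryOrder {α : Type} (Bd : Set (ℝ × ℝ)) (piece : α → Set (ℝ × ℝ))
    (l : List α) : Prop :=
  ∃ (γ : ℝ → ℝ × ℝ) (τ : ℕ → ℝ),
    Continuous γ ∧ (∀ t, γ (t + 1) = γ t) ∧ Set.InjOn γ (Set.Ico (0 : ℝ) 1) ∧
    Set.range γ = Bd ∧ τ 0 = 0 ∧ τ l.length = 1 ∧
    (∀ i < l.length, τ i < τ (i + 1)) ∧
    ∀ i (hi : i < l.length), γ '' Set.Icc (τ i) (τ (i + 1)) ⊆ piece (l.get ⟨i, hi⟩)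

end Paper

namespace Paper

lemma aux_sq (b : ℝ × ℝ) (e : ℝ) :
    ulSq (b.1 + e, b.2 + e) =
      {p : ℝ × ℝ | |(p.1 - b.1) - (p.2 - b.2) - 1| ≤ 1 - |(p.1 - b.1) + (p.2 - b.2) - 2 * e|} := by
  ext ⟨x, y⟩
  simp only [ulSq, Set.mem_prod, Set.mem_Icc, Set.mem_ofPred_eq]
  constructor
  · rintro ⟨⟨h1, h2⟩, h3, h4⟩
    rcases abs_cases (x - b.1 - (y - b.2) - 1) with h | h <;>
    rcases abs_cases (x - b.1 + (y - b.2) - 2 * e) with h' | h' <;> linarith [h.1, h'.1]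
  · intro h
    have h1 := le_abs_self (x - b.1 - (y - b.2) - 1)
    have h2 := neg_abs_le (x - b.1 - (y - b.2) - 1)
    have h3 := le_abs_self (x - b.1 + (y - b.2) - 2 * e)
    have h4 := neg_abs_le (x - b.1 + (y - b.2) - 2 * e)
    refine ⟨⟨?_, ?_⟩, ?_, ?_⟩ <;> linarith

lemma aux_frontier (b : ℝ × ℝ) (H : ℝ → ℝ) (hH : Continuous H) :
    frontier {p : ℝ × ℝ | |(p.1 - b.1) - (p.2 - b.2) - 1| ≤ H ((p.1 - b.1) + (p.2 - b.2))} =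
      {p : ℝ × ℝ | |(p.1 - b.1) - (p.2 - b.2) - 1| = H ((p.1 - b.1) + (p.2 - b.2))} := by
  apply Set.Subset.antisymm
  · exact frontier_le_subset_eq (by fun_prop) (by fun_prop)
  · rintro ⟨x, y⟩ hp
    simp only [Set.mem_ofPred_eq] at hp
    rw [frontier_eq_closure_inter_closure]
    refine ⟨subset_closure (by simp [hp]), ?_⟩
    obtain ⟨σ, hσ⟩ : ∃ σ : ℝ, ∀ ε > 0,
        |x - b.1 - (y - b.2) - 1| < |x - b.1 - (y - b.2) - 1 + 2 * (σ * ε)| := by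
      rcases le_total 0 (x - b.1 - (y - b.2) - 1) with h | h
      · refine ⟨1, fun ε hε => ?_⟩
        rw [abs_of_nonneg h, abs_of_nonneg (by linarith)]; linarith
      · refine ⟨-1, fun ε hε => ?_⟩
        rw [abs_of_nonpos h, abs_of_nonpos (by linarith)]; linarith
    have hc : Filter.Tendsto (fun ε : ℝ => ((x + σ * ε, y - σ * ε) : ℝ × ℝ))
        (nhdsWithin 0 (Set.Ioi 0)) (nhds (x, y)) := by
      have : Continuous (fun ε : ℝ => ((x + σ * ε, y - σ * ε) : ℝ × ℝ)) := by fun_prop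
      have h2 := this.tendsto 0
      simp only [mul_zero, add_zero, sub_zero] at h2
      exact h2.mono_left nhdsWithin_le_nhds
    apply mem_closure_of_tendsto hc
    filter_upwards [self_mem_nhdsWithin] with ε hε
    have := hσ ε hε
    simp only [Set.mem_compl_iff, Set.mem_ofPred_eq, not_le]
    have e1 : x + σ * ε - b.1 + (y - σ * ε - b.2) = x - b.1 + (y - b.2) := by ring
    have e2 : x + σ * ε - b.1 - (y - σ * ε - b.2) - 1
      = x - b.1 - (y - b.2) - 1 + 2 * (σ * ε) := by ring
    rw [e1, e2, ← hp]; exact this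

/-- change of coordinates -/
noncomputable def FF (b : ℝ × ℝ) (s d : ℝ) : ℝ × ℝ := (b.1 + (s + d) / 2, b.2 + (s - d) / 2)

lemma FF_s (b : ℝ × ℝ) (s d : ℝ) : ((FF b s d).1 - b.1) + ((FF b s d).2 - b.2) = s := by
  simp only [FF]; ring

lemma FF_d (b : ℝ × ℝ) (s d : ℝ) : ((FF b s d).1 - b.1) - ((FF b s d).2 - b.2) = d := by
  simp only [FF]; ring

lemma FF_surj (b p : ℝ × ℝ) :
    FF b ((p.1 - b.1) + (p.2 - b.2)) ((p.1 - b.1) - (p.2 - b.2)) = p := by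
  ext <;> simp only [FF] <;> ring

/-- the closed curve -/
noncomputable def PP (b : ℝ × ℝ) (h : ℝ → ℝ) (m r θ : ℝ) : ℝ × ℝ :=
  FF b (m - r * Real.cos θ)
    (if 0 ≤ Real.sin θ then 1 - h (m - r * Real.cos θ) else 1 + h (m - r * Real.cos θ))

lemma cos_of_sin_zero {θ : ℝ} (hθ : Real.sin θ = 0) : Real.cos θ = 1 ∨ Real.cos θ = -1 := by
  have := Real.sin_sq_add_cos_sq θ
  rw [hθ] at this
  have h2 : (Real.cos θ - 1) * (Real.cos θ + 1) = 0 := by nlinarith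
  rcases mul_eq_zero.1 h2 with h | h
  · left; linarith
  · right; linarith

lemma PP_cont (b : ℝ × ℝ) (h : ℝ → ℝ) (m r : ℝ) (hc : Continuous h)
    (ha : h (m - r) = 0) (hb : h (m + r) = 0) : Continuous (PP b h m r) := by
  have h1 : Continuous (fun θ : ℝ => if 0 ≤ Real.sin θ then 1 - h (m - r * Real.cos θ)
      else 1 + h (m - r * Real.cos θ)) := by
    apply Continuous.if_le
    · fun_prop
    · fun_prop
    · fun_prop
    · fun_prop
    · intro θ hθ
      rcases cos_of_sin_zero hθ.symm with h | h <;> rw [h]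
      · rw [mul_one, ha]; ring
      · rw [show m - r * -1 = m + r by ring, hb]; ring
  unfold PP FF
  fun_prop

lemma PP_per (b : ℝ × ℝ) (h : ℝ → ℝ) (m r θ : ℝ) :
    PP b h m r (θ + 2 * Real.pi) = PP b h m r θ := by
  simp [PP]

lemma PP_abs (b : ℝ × ℝ) (h : ℝ → ℝ) (m r θ : ℝ) (h0 : 0 ≤ h (m - r * Real.cos θ)) :
    |((PP b h m r θ).1 - b.1) - ((PP b h m r θ).2 - b.2) - 1| = h (m - r * Real.cos θ) := by
  unfold PP
  rw [FF_d]
  split_ifs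
  · rw [show 1 - h (m - r * Real.cos θ) - 1 = - h (m - r * Real.cos θ) by ring, abs_neg,
      abs_of_nonneg h0]
  · rw [show 1 + h (m - r * Real.cos θ) - 1 = h (m - r * Real.cos θ) by ring,
      abs_of_nonneg h0]

lemma PP_s (b : ℝ × ℝ) (h : ℝ → ℝ) (m r θ : ℝ) :
    ((PP b h m r θ).1 - b.1) + ((PP b h m r θ).2 - b.2) = m - r * Real.cos θ := by
  unfold PP; rw [FF_s]

lemma PP_inj (b : ℝ × ℝ) (h : ℝ → ℝ) (m r : ℝ) (hr : 0 < r)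
    (hpos : ∀ s, m - r < s → s < m + r → 0 < h s) (θ θ' : ℝ)
    (he : PP b h m r θ = PP b h m r θ') :
    ∃ n : ℤ, θ - θ' = 2 * Real.pi * n := by
  have hs : m - r * Real.cos θ = m - r * Real.cos θ' := by
    rw [← PP_s b h m r θ, he, PP_s]
  have hcos : Real.cos θ = Real.cos θ' := by
    have : r * Real.cos θ = r * Real.cos θ' := by linarith
    exact mul_left_cancel₀ hr.ne' this
  have hd : (if 0 ≤ Real.sin θ then 1 - h (m - r * Real.cos θ) else 1 + h (m - r * Real.cos θ))
      = (if 0 ≤ Real.sin θ' then 1 - h (m - r * Real.cos θ') else 1 + h (m - r * Real.cos θ')) := by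
    have := congrArg (fun p : ℝ × ℝ => (p.1 - b.1) - (p.2 - b.2)) he
    simp only [PP, FF_d] at this
    exact this
  rw [← hcos] at hd
  have hsq : Real.sin θ ^ 2 = Real.sin θ' ^ 2 := by
    have h1 := Real.sin_sq_add_cos_sq θ
    have h2 := Real.sin_sq_add_cos_sq θ'
    rw [← hcos] at h2; linarith
  have key : Real.sin θ ≠ 0 → 0 < h (m - r * Real.cos θ) := by
    intro hne
    have h3 : 0 < Real.sin θ ^ 2 := by positivity
    have h1 := Real.sin_sq_add_cos_sq θ
    have h4 : Real.cos θ < 1 := by nlinarith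
    have h5 : -1 < Real.cos θ := by nlinarith
    apply hpos <;> nlinarith
  have hsin : Real.sin θ = Real.sin θ' := by
    by_cases h0 : Real.sin θ = 0
    · rw [h0] at hsq ⊢
      have : Real.sin θ' ^ 2 = 0 := by rw [← hsq]; norm_num
      exact (pow_eq_zero_iff (two_ne_zero) |>.1 this).symm
    · have hk := key h0
      rcases sq_eq_sq_iff_eq_or_eq_neg.1 hsq with h | h
      · exact h
      · exfalso
        rcases lt_or_gt_of_ne h0 with h1 | h1
        · rw [if_neg (by linarith), if_pos (by linarith)] at hd; linarith
        · rw [if_pos (by linarith), if_neg (by linarith)] at hd; linarith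
  have := Real.Angle.cos_sin_inj hcos hsin
  exact Real.Angle.angle_eq_iff_two_pi_dvd_sub.1 this

lemma PP_range (b : ℝ × ℝ) (h : ℝ → ℝ) (m r : ℝ) (hr : 0 < r)
    (hnn : ∀ s, 0 ≤ h s ↔ m - r ≤ s ∧ s ≤ m + r) (ha : h (m - r) = 0) (hb : h (m + r) = 0) :
    Set.range (PP b h m r) =
      {p : ℝ × ℝ | |(p.1 - b.1) - (p.2 - b.2) - 1| = h ((p.1 - b.1) + (p.2 - b.2))} := by
  apply Set.Subset.antisymm
  · rintro _ ⟨θ, rfl⟩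
    simp only [Set.mem_ofPred_eq]
    rw [PP_s, PP_abs]
    rw [hnn]
    have := Real.cos_le_one θ
    have := Real.neg_one_le_cos θ
    constructor <;> nlinarith
  · intro p hp
    simp only [Set.mem_ofPred_eq] at hp
    rw [← FF_surj b p]
    generalize (p.1 - b.1) + (p.2 - b.2) = s at *
    generalize (p.1 - b.1) - (p.2 - b.2) = d at *
    have h0 : 0 ≤ h s := by rw [← hp]; positivity
    obtain ⟨h1, h2⟩ := (hnn s).1 h0
    have hcc : Real.cos (Real.arccos ((m - s) / r)) = (m - s) / r := by
      apply Real.cos_arccos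
      · rw [le_div_iff₀ hr]; linarith
      · rw [div_le_iff₀ hr]; linarith
    have hcs : m - r * ((m - s) / r) = s := by field_simp; ring
    have hsn : 0 ≤ Real.sin (Real.arccos ((m - s) / r)) := by
      rw [Real.sin_arccos]; positivity
    rcases le_total (d - 1) 0 with hd | hd
    · rw [abs_of_nonpos hd] at hp
      refine ⟨Real.arccos ((m - s) / r), ?_⟩
      unfold PP
      rw [hcc, hcs, if_pos hsn, ← hp]
      congr 1; ring
    · rw [abs_of_nonneg hd] at hp
      refine ⟨-Real.arccos ((m - s) / r), ?_⟩
      unfold PP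
      rw [Real.cos_neg, hcc, hcs, Real.sin_neg]
      split_ifs with hh
      · have hz : Real.sin (Real.arccos ((m - s) / r)) = 0 := by linarith
        have : h s = 0 := by
          rw [← hcs, ← hcc]
          rcases cos_of_sin_zero hz with h | h <;> rw [h]
          · rw [mul_one, ha]
          · rw [show m - r * -1 = m + r by ring, hb]
        congr 1; linarith
      · congr 1; linarith

lemma cos_le_of_mem {A θ : ℝ} (h0 : 0 ≤ A) (h1 : A ≤ θ) (h2 : θ ≤ 2 * Real.pi - A) :
    Real.cos θ ≤ Real.cos A := by
  rcases le_total θ Real.pi with h | h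
  · exact Real.cos_le_cos_of_nonneg_of_le_pi h0 h h1
  · have : Real.cos θ = Real.cos (2 * Real.pi - θ) := by rw [Real.cos_two_pi_sub]
    rw [this]
    exact Real.cos_le_cos_of_nonneg_of_le_pi h0 (by linarith) (by linarith)

lemma le_cos_of_mem {A θ : ℝ} (h0 : A ≤ Real.pi) (h1 : -A ≤ θ) (h2 : θ ≤ A) :
    Real.cos A ≤ Real.cos θ := by
  rw [← Real.cos_abs θ]
  exact Real.cos_le_cos_of_nonneg_of_le_pi (abs_nonneg _) h0 (abs_le.2 ⟨h1, h2⟩)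

lemma le_cos_of_mem' {A θ : ℝ} (h0 : A ≤ Real.pi) (h1 : 2 * Real.pi - A ≤ θ)
    (h2 : θ ≤ 2 * Real.pi + A) : Real.cos A ≤ Real.cos θ := by
  rw [← Real.cos_sub_two_pi θ]
  exact le_cos_of_mem h0 (by linarith) (by linarith)

/-- Voronoi cells -/
lemma cell_iff {k : ℕ} (δ : Fin k → ℝ) (hmono : StrictMono δ) (h : ℝ → ℝ)
    (hge : ∀ s i, 1 - |s - 2 * δ i| ≤ h s) (hex : ∀ s, ∃ i, h s = 1 - |s - 2 * δ i|)
    (s : ℝ) (i : Fin k) :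
    h s = 1 - |s - 2 * δ i| ↔ (∀ j < i, δ j + δ i ≤ s) ∧ (∀ j, i < j → s ≤ δ i + δ j) := by
  constructor
  · intro he
    constructor
    · intro j hj
      have h1 := hge s j
      have h2 := hmono hj
      rw [he] at h1
      rcases abs_cases (s - 2 * δ i) with h | h <;>
        rcases abs_cases (s - 2 * δ j) with h' | h' <;> linarith [h.1, h'.1, h.2, h'.2]
    · intro j hj
      have h1 := hge s j
      have h2 := hmono hj
      rw [he] at h1
      rcases abs_cases (s - 2 * δ i) with h | h <;>
        rcases abs_cases (s - 2 * δ j) with h' | h' <;> linarith [h.1, h'.1, h.2, h'.2]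
  · rintro ⟨c1, c2⟩
    refine le_antisymm ?_ (hge s i)
    obtain ⟨j, hj⟩ := hex s
    rw [hj]
    rcases lt_trichotomy j i with hji | hji | hji
    · have h1 := c1 j hji
      have h2 := hmono hji
      rcases abs_cases (s - 2 * δ i) with h | h <;>
        rcases abs_cases (s - 2 * δ j) with h' | h' <;> linarith [h.1, h'.1, h.2, h'.2]
    · rw [hji]
    · have h1 := c2 j hji
      have h2 := hmono hji
      rcases abs_cases (s - 2 * δ i) with h | h <;>
        rcases abs_cases (s - 2 * δ j) with h' | h' <;> linarith [h.1, h'.1, h.2, h'.2]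

/-- the two arcs -/
lemma arcs_eq (b : ℝ × ℝ) (h g : ℝ → ℝ) :
    {p : ℝ × ℝ | |(p.1 - b.1) - (p.2 - b.2) - 1| = h ((p.1 - b.1) + (p.2 - b.2))} ∩
    {p : ℝ × ℝ | |(p.1 - b.1) - (p.2 - b.2) - 1| = g ((p.1 - b.1) + (p.2 - b.2))} =
    (fun s => FF b s (1 - h s)) '' {s | 0 ≤ h s ∧ h s = g s} ∪
    (fun s => FF b s (1 + h s)) '' {s | 0 ≤ h s ∧ h s = g s} := by
  ext p
  constructor
  · rintro ⟨h1, h2⟩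
    simp only [Set.mem_ofPred_eq] at h1 h2
    rw [← FF_surj b p]
    generalize (p.1 - b.1) + (p.2 - b.2) = s at *
    generalize (p.1 - b.1) - (p.2 - b.2) = d at *
    have hm : s ∈ {s | 0 ≤ h s ∧ h s = g s} := ⟨by rw [← h1]; positivity, by rw [← h1, h2]⟩
    rcases le_total (d - 1) 0 with hd | hd
    · left
      rw [abs_of_nonpos hd] at h1
      refine ⟨s, hm, ?_⟩
      simp only
      rw [← h1]; congr 1; ring
    · right
      rw [abs_of_nonneg hd] at h1
      refine ⟨s, hm, ?_⟩
      simp only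
      rw [← h1]; congr 1; ring
  · rintro (⟨s, ⟨h1, h2⟩, rfl⟩ | ⟨s, ⟨h1, h2⟩, rfl⟩)
    · simp only [Set.mem_inter_iff, Set.mem_ofPred_eq]
      rw [FF_s, FF_d, ← h2, show 1 - h s - 1 = -h s by ring, abs_neg, abs_of_nonneg h1]
      simp
    · simp only [Set.mem_inter_iff, Set.mem_ofPred_eq]
      rw [FF_s, FF_d, ← h2, show 1 + h s - 1 = h s by ring, abs_of_nonneg h1]
      simp

end Paper
namespace Paper

lemma bd_order (k : ℕ) (hk : 3 ≤ k) (b : ℝ × ℝ) (δ : Fin k → ℝ)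
    (hmono : StrictMono δ) (h : ℝ → ℝ) (hc : Continuous h)
    (hge : ∀ s i, 1 - |s - 2 * δ i| ≤ h s) (hex : ∀ s, ∃ i, h s = 1 - |s - 2 * δ i|)
    (m r : ℝ) (hr : 0 < r)
    (lo hi : Fin k) (hlo : (lo : ℕ) = 0) (hhi : (hi : ℕ) = k - 1)
    (hm1 : m - r = 2 * δ lo - 1) (hm2 : m + r = 2 * δ hi + 1)
    (hpos : ∀ s, m - r < s → s < m + r → 0 < h s)
    (hnn : ∀ s, 0 ≤ h s ↔ m - r ≤ s ∧ s ≤ m + r) (ha : h (m - r) = 0) (hb : h (m + r) = 0)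
    (l : List (Fin k)) (hlen : l.length = 2 * k - 2)
    (hl1 : ∀ i (hi : i < l.length), i < k → (l.get ⟨i, hi⟩ : ℕ) = i)
    (hl2 : ∀ i (hi : i < l.length), k ≤ i → (l.get ⟨i, hi⟩ : ℕ) = 2 * k - 2 - i) :
    BoundaryOrder
      {p : ℝ × ℝ | |(p.1 - b.1) - (p.2 - b.2) - 1| = h ((p.1 - b.1) + (p.2 - b.2))}
      (fun i => {p : ℝ × ℝ | |(p.1 - b.1) - (p.2 - b.2) - 1|
        = 1 - |(p.1 - b.1) + (p.2 - b.2) - 2 * δ i|}) l := by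
  have hpi := Real.pi_pos
  obtain ⟨D, hD⟩ : ∃ D : ℕ → ℝ, ∀ i : Fin k, D i = δ i :=
    ⟨fun n => δ ⟨min n (k - 1), by omega⟩, fun i =>
      congrArg δ (Fin.ext (by have := i.2; simp only; omega))⟩
  have hDm : ∀ i j, i < j → j < k → D i < D j := by
    intro i j hij hj
    have h1 := hD ⟨i, by omega⟩
    have h2 := hD ⟨j, hj⟩
    simp only at h1 h2
    rw [h1, h2]; exact hmono hij
  have hDm' : ∀ i j, i ≤ j → j < k → D i ≤ D j := by
    intro i j hij hj
    rcases hij.eq_or_lt with h | h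
    · rw [h]
    · exact (hDm i j h hj).le
  rw [← hD] at hm1 hm2
  rw [hlo] at hm1
  rw [hhi] at hm2
  set c : ℕ → ℝ := fun j => (m - (D j + D (j + 1))) / r with hcdef
  set A : ℕ → ℝ := fun j => Real.arccos (c j) with hA
  have hcm : ∀ j, j + 1 < k → -1 < c j ∧ c j < 1 := by
    intro j hj
    have h1 := hDm' 0 j (by omega) (by omega)
    have h2 := hDm' 0 (j + 1) (by omega) (by omega)
    have h3 := hDm' j (k - 1) (by omega) (by omega)
    have h4 := hDm' (j + 1) (k - 1) (by omega) (by omega)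
    simp only [hcdef]
    rw [lt_div_iff₀ hr, div_lt_iff₀ hr]
    constructor <;> linarith
  have hA0 : ∀ j, j + 1 < k → 0 < A j := fun j hj => Real.arccos_pos.2 (hcm j hj).2
  have hApi : ∀ j, j + 1 < k → A j < Real.pi := fun j hj => by
    refine lt_of_le_of_ne (Real.arccos_le_pi _) ?_
    intro he
    have := Real.arccos_eq_pi.1 he
    linarith [(hcm j hj).1]
  have hAcos : ∀ j, j + 1 < k → r * Real.cos (A j) = m - (D j + D (j + 1)) := fun j hj => by
    simp only [hA]
    rw [Real.cos_arccos (hcm j hj).1.le (hcm j hj).2.le]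
    simp only [hcdef]
    field_simp
  have hAs : ∀ j, j + 2 < k → A j < A (j + 1) := by
    intro j hj
    apply Real.strictAntiOn_arccos
    · exact ⟨(hcm _ (by omega)).1.le, (hcm _ (by omega)).2.le⟩
    · exact ⟨(hcm _ (by omega)).1.le, (hcm _ (by omega)).2.le⟩
    · simp only [hcdef]
      have h1 := hDm j (j + 1) (by omega) (by omega)
      have h2 := hDm (j + 1) (j + 1 + 1) (by omega) (by omega)
      gcongr
  set T : ℕ → ℝ := fun n => if n = 0 then - A 0 else if n < k then A (n - 1)
    else 2 * Real.pi - A (2 * k - 2 - n) with hT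
  have T0 : T 0 = - A 0 := by simp [hT]
  have T1 : ∀ n, n + 1 < k → T (n + 1) = A n := by
    intro n hn; simp [hT, hn]
  have T2 : ∀ n, k ≤ n → T n = 2 * Real.pi - A (2 * k - 2 - n) := by
    intro n hn
    simp only [hT]
    rw [if_neg (by omega), if_neg (by omega)]
  have hTe : T (2 * k - 2) = T 0 + 2 * Real.pi := by
    rw [T0, T2 _ (by omega)]
    simp; ring
  have hTs : ∀ i < 2 * k - 2, T i < T (i + 1) := by
    intro i hi
    rcases Nat.eq_zero_or_pos i with h0 | h0
    · subst h0
      rw [T0, T1 0 (by omega)]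
      linarith [hA0 0 (by omega)]
    · obtain ⟨n, rfl⟩ : ∃ n, i = n + 1 := ⟨i - 1, by omega⟩
      rcases lt_trichotomy (n + 2) k with h1 | h1 | h1
      · rw [T1 n (by omega), T1 (n + 1) (by omega)]
        exact hAs n h1
      · rw [T1 n (by omega), T2 _ (by omega)]
        have e : 2 * k - 2 - (n + 1 + 1) = n := by omega
        rw [e]
        linarith [hApi n (by omega)]
      · rw [T2 _ (by omega), T2 _ (by omega)]
        have := hAs (2 * k - 2 - (n + 1 + 1)) (by omega)
        have e : 2 * k - 2 - (n + 1) = 2 * k - 2 - (n + 1 + 1) + 1 := by omega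
        rw [e]
        linarith
  -- membership
  have hmem : ∀ (i : Fin k) (θ : ℝ),
      (∀ n, (i : ℕ) = n + 1 → A n ≤ θ ∧ θ ≤ 2 * Real.pi - A n) →
      ((i : ℕ) + 1 < k → (-A i ≤ θ ∧ θ ≤ A i) ∨
        (2 * Real.pi - A i ≤ θ ∧ θ ≤ 2 * Real.pi + A i)) →
      |((PP b h m r θ).1 - b.1) - ((PP b h m r θ).2 - b.2) - 1|
        = 1 - |((PP b h m r θ).1 - b.1) + ((PP b h m r θ).2 - b.2) - 2 * δ i| := by
    intro i θ c1 c2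
    rw [PP_s, PP_abs]
    · rw [cell_iff δ hmono h hge hex]
      constructor
      · intro j hj
        obtain ⟨n, hn⟩ : ∃ n, (i : ℕ) = n + 1 := ⟨i - 1, by have := Fin.lt_def.1 hj; omega⟩
        have hi := i.2
        obtain ⟨q1, q2⟩ := c1 n hn
        have q3 := cos_le_of_mem (hA0 n (by omega)).le q1 q2
        have q4 := hAcos n (by omega)
        have q5 := mul_le_mul_of_nonneg_left q3 hr.le
        have q6 := hDm' j n (by have := Fin.lt_def.1 hj; omega) (by omega)
        rw [← hD, ← hD, hn]
        linarith
      · intro j hj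
        have hj' := Fin.lt_def.1 hj
        have hi : (i : ℕ) + 1 < k := by omega
        have q3 : Real.cos (A i) ≤ Real.cos θ := by
          rcases c2 hi with ⟨q1, q2⟩ | ⟨q1, q2⟩
          · exact le_cos_of_mem (hApi _ hi).le q1 q2
          · exact le_cos_of_mem' (hApi _ hi).le q1 q2
        have q4 := hAcos i hi
        have q5 := mul_le_mul_of_nonneg_left q3 hr.le
        have q6 := hDm' (i + 1) j (by omega) (by omega)
        rw [← hD, ← hD]
        linarith
    · rw [hnn]
      have := Real.cos_le_one θ
      have := Real.neg_one_le_cos θ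
      constructor <;> nlinarith
  have hAle : ∀ i j, i ≤ j → j + 1 < k → A i ≤ A j := by
    intro i j hij
    induction j, hij using Nat.le_induction with
    | base => intro _; exact le_rfl
    | succ j hj ih => intro hh; exact (ih (by omega)).trans (hAs j (by omega)).le
  refine ⟨fun t => PP b h m r (2 * Real.pi * t + T 0), fun n => (T n - T 0) / (2 * Real.pi),
    ?_, ?_, ?_, ?_, ?_, ?_, ?_, ?_⟩
  · exact (PP_cont b h m r hc ha hb).comp (by fun_prop)
  · intro t
    simp only
    rw [← PP_per b h m r (2 * Real.pi * t + T 0)]; congr 1; ring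
  · intro t ht t' ht' he
    obtain ⟨n, hn⟩ := PP_inj b h m r hr hpos _ _ he
    have h1 : 2 * Real.pi * (t - t') = 2 * Real.pi * n := by linarith
    have h2 : t - t' = n := mul_left_cancel₀ (by positivity) h1
    have h3 : (n : ℝ) < 1 := by linarith [ht.2, ht'.1]
    have h4 : (-1 : ℝ) < n := by linarith [ht.1, ht'.2]
    have h5 : n < 1 := by exact_mod_cast h3
    have h6 : -1 < n := by exact_mod_cast h4
    have h7 : n = 0 := by omega
    rw [h7] at h2
    push_cast at h2; linarith
  · rw [← PP_range b h m r hr hnn ha hb]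
    apply Set.Subset.antisymm
    · rintro _ ⟨t, rfl⟩; exact ⟨_, rfl⟩
    · rintro _ ⟨θ, rfl⟩
      refine ⟨(θ - T 0) / (2 * Real.pi), ?_⟩
      simp only
      congr 1; field_simp; ring
  · simp
  · simp only
    rw [hlen, hTe]; field_simp; ring
  · intro i hi
    simp only
    have := hTs i (by omega)
    gcongr
  · intro i hi
    rintro _ ⟨t, ⟨ht1, ht2⟩, rfl⟩
    simp only at ht1 ht2
    rw [div_le_iff₀ (by positivity)] at ht1
    rw [le_div_iff₀ (by positivity)] at ht2
    have ht1' : T i ≤ 2 * Real.pi * t + T 0 := by linarith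
    have ht2' : 2 * Real.pi * t + T 0 ≤ T (i + 1) := by linarith
    simp only [Set.mem_ofPred_eq]
    generalize 2 * Real.pi * t + T 0 = θ at *
    have hl1 := hl1 i hi
    have hl2 := hl2 i hi
    generalize l.get ⟨i, hi⟩ = q at *
    apply hmem
    · intro n hn
      by_cases hik : i < k
      · have := hl1 hik
        obtain rfl : i = n + 1 := by omega
        rw [T1 n (by omega)] at ht1'
        refine ⟨ht1', ht2'.trans ?_⟩
        by_cases h2 : n + 2 < k
        · rw [T1 _ h2]
          linarith [hApi n (by omega), hApi (n + 1) h2]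
        · rw [T2 _ (by omega)]
          have e : 2 * k - 2 - (n + 1 + 1) = n := by omega
          rw [e]
      · have := hl2 (by omega)
        rw [T2 _ (by omega)] at ht1' ht2'
        have e1 : 2 * k - 2 - i = n + 1 := by omega
        have e2 : 2 * k - 2 - (i + 1) = n := by omega
        rw [e1] at ht1'
        rw [e2] at ht2'
        refine ⟨?_, ht2'⟩
        linarith [hApi n (by omega), hApi (n + 1) (by omega)]
    · intro hq
      by_cases hik : i < k
      · have := hl1 hik
        left
        rw [this]
        rw [T1 _ (by omega)] at ht2'
        refine ⟨le_trans ?_ ht1', ht2'⟩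
        rcases Nat.eq_zero_or_pos i with h0 | h0
        · subst h0; rw [T0]
        · obtain ⟨n, rfl⟩ : ∃ n, i = n + 1 := ⟨i - 1, by omega⟩
          rw [T1 n (by omega)]
          linarith [hA0 n (by omega), hA0 (n + 1) (by omega)]
      · have := hl2 (by omega)
        right
        rw [T2 _ (by omega)] at ht1' ht2'
        rw [this]
        refine ⟨ht1', ht2'.trans ?_⟩
        linarith [hA0 (2 * k - 2 - i) (by omega), hA0 (2 * k - 2 - (i + 1)) (by omega)]

lemma conn_arcs {k : ℕ} (b : ℝ × ℝ) (δ : Fin k → ℝ) (hmono : StrictMono δ) (h : ℝ → ℝ)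
    (hc : Continuous h)
    (hge : ∀ s i, 1 - |s - 2 * δ i| ≤ h s) (hex : ∀ s, ∃ i, h s = 1 - |s - 2 * δ i|)
    (a B : ℝ) (hnn : ∀ s, 0 ≤ h s ↔ a ≤ s ∧ s ≤ B) (i : Fin k) (σ : ℝ) :
    IsConnected ((fun s => FF b s (1 + σ * h s)) '' {s | 0 ≤ h s ∧ h s = 1 - |s - 2 * δ i|}) := by
  apply IsConnected.image
  · refine ⟨⟨2 * δ i, ?_⟩, ?_⟩
    · have h1 : h (2 * δ i) = 1 - |2 * δ i - 2 * δ i| := by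
        rw [cell_iff δ hmono h hge hex]
        constructor
        · intro j hj; linarith [hmono hj]
        · intro j hj; linarith [hmono hj]
      refine ⟨?_, h1⟩
      rw [h1]; simp
    · apply Set.OrdConnected.isPreconnected
      refine ⟨?_⟩
      rintro x ⟨hx1, hx2⟩ y ⟨hy1, hy2⟩ z ⟨hz1, hz2⟩
      rw [cell_iff δ hmono h hge hex] at hx2 hy2
      rw [hnn] at hx1 hy1
      refine ⟨?_, ?_⟩
      · rw [hnn]; constructor <;> linarith
      · rw [cell_iff δ hmono h hge hex]
        exact ⟨fun j hj => (hx2.1 j hj).trans hz1, fun j hj => hz2.trans (hy2.2 j hj)⟩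
  · apply Continuous.continuousOn
    unfold FF; fun_prop

lemma sq_cw : ConvexCW (fun n => if n = 0 then (0, 0) else if n = 1 then (0, 1)
    else if n = 2 then (1, 1) else (1, 0)) 4 := by
  intro i hi j hj h1 h2
  interval_cases i <;> interval_cases j <;>
    first
    | exact absurd rfl h1
    | exact absurd rfl h2
    | norm_num [cross2]

end Paper

namespace Paper

/-- In a canonical intersection-link representation of a
cluster of size `k ≥ 3` (unit squares `S i` whose upper-left corners lie, with
strictly increasing offsets `δ i`, on a line of slope one, all pairwise
overlapping), walking along the boundary of the union `U` of the squares, the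
`k - 2` middle vertices appear exactly twice, forming two maximal sequences
that occur in opposite orders, and these two sequences are separated by the
two extreme vertices, each of which appears exactly once along the boundary.
Consequently, such a cluster can be modeled in a PolyLink representation as a
(convex) polygon with four sides in which one pair of antipodal sides carries
the `k - 2` doubly-appearing vertices (in opposite orders) and the other two
sides each carry one of the two remaining vertices. -/
theorem canonical_cluster_boundary_and_polylink_modeling
    (k : ℕ) (hk : 3 ≤ k) (b : ℝ × ℝ) (δ : Fin k → ℝ)
    (hmono : StrictMono δ)
    (hoverlap : ∀ i j : Fin k, δ j - δ i < 1) :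
    ∀ S : Fin k → Set (ℝ × ℝ),
      (∀ i, S i = ulSq (b.1 + δ i, b.2 + δ i)) →
    ∀ U : Set (ℝ × ℝ), U = ⋃ i, S i →
    ∃ (lo hi : Fin k) (mid : List (Fin k)),
      lo = ⟨0, by omega⟩ ∧ hi = ⟨k - 1, by omega⟩ ∧
      mid.Chain' (· < ·) ∧ (∀ i : Fin k, i ∈ mid ↔ (i ≠ lo ∧ i ≠ hi)) ∧
      -- the boundary of `U` consists, in cyclic order, of: an arc on `S lo`,
      -- arcs on the middle squares in increasing order, an arc on `S hi`, and
      -- arcs on the middle squares in the reverse (opposite) order: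
      BoundaryOrder (frontier U) (fun i => frontier (S i))
        ([lo] ++ mid ++ [hi] ++ mid.reverse) ∧
      -- each extreme square appears exactly once (one boundary arc):
      IsConnected (frontier U ∩ frontier (S lo)) ∧
      IsConnected (frontier U ∩ frontier (S hi)) ∧
      -- each middle square appears exactly twice (two disjoint boundary arcs):
      (∀ i : Fin k, i ≠ lo → i ≠ hi →
        ¬ IsPreconnected (frontier U ∩ frontier (S i)) ∧
        ∃ A B : Set (ℝ × ℝ), IsConnected A ∧ IsConnected B ∧ Disjoint A B ∧
          A ∪ B = frontier U ∩ frontier (S i)) ∧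
      -- PolyLink modeling by a four-sided polygon: the middle vertices lie on
      -- the antipodal side pair `{0, 2}`, in opposite orders, while each of
      -- the two extreme vertices is carried by one of the two other sides:
      (∃ (corner : ℕ → ℝ × ℝ) (pairOf : Fin k → ℕ) (par : Fin k → Bool → ℝ),
        ConvexCW corner 4 ∧
        (∀ i : Fin k, pairOf i = if i = lo ∨ i = hi then 1 else 0) ∧
        (∀ i bb, par i bb ∈ Set.Ioo (0 : ℝ) 1) ∧
        (∀ i j : Fin k, i ≠ j → pairOf i = pairOf j → ∀ bb, par i bb ≠ par j bb) ∧
        (∀ i j : Fin k, i ≠ lo → i ≠ hi → j ≠ lo → j ≠ hi →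
          ((par i false < par j false ↔ i < j) ∧
            (par i true < par j true ↔ j < i)))) := by
  intro S hS U hU
  have hne : (Finset.univ : Finset (Fin k)).Nonempty := ⟨⟨0, by omega⟩, Finset.mem_univ _⟩
  obtain ⟨h, hc, hge, hex⟩ : ∃ h : ℝ → ℝ, Continuous h ∧ (∀ s i, 1 - |s - 2 * δ i| ≤ h s) ∧
      (∀ s, ∃ i, h s = 1 - |s - 2 * δ i|) := by
    refine ⟨fun s => Finset.univ.sup' hne (fun i => 1 - |s - 2 * δ i|), ?_, ?_, ?_⟩
    · apply Continuous.finset_sup'_apply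
      intro i _; fun_prop
    · intro s i
      exact Finset.le_sup' (fun i => 1 - |s - 2 * δ i|) (Finset.mem_univ i)
    · intro s
      obtain ⟨i, _, hi⟩ := Finset.exists_mem_eq_sup' hne (fun i => 1 - |s - 2 * δ i|)
      exact ⟨i, hi⟩
  set lo : Fin k := ⟨0, by omega⟩ with hlo
  set hi : Fin k := ⟨k - 1, by omega⟩ with hhi
  have hlole : ∀ i, lo ≤ i := fun i => by rw [Fin.le_def]; simp [hlo]
  have hlehi : ∀ i, i ≤ hi := fun i => by rw [Fin.le_def]; simp only [hhi]; omega
  have hlohi : lo < hi := by rw [Fin.lt_def]; simp only [hlo, hhi]; omega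
  have dlo : ∀ i, δ lo ≤ δ i := fun i => hmono.monotone (hlole i)
  have dhi : ∀ i, δ i ≤ δ hi := fun i => hmono.monotone (hlehi i)
  have dlt := hmono hlohi
  have hov := hoverlap lo hi
  have hpos : ∀ s, 2 * δ lo - 1 < s → s < 2 * δ hi + 1 → 0 < h s := by
    intro s h1 h2
    by_cases h3 : s < 2 * δ lo + 1
    · refine lt_of_lt_of_le ?_ (hge s lo)
      have : |s - 2 * δ lo| < 1 := abs_lt.2 ⟨by linarith, by linarith⟩
      linarith
    · refine lt_of_lt_of_le ?_ (hge s hi)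
      have : |s - 2 * δ hi| < 1 := abs_lt.2 ⟨by linarith, by linarith⟩
      linarith
  have cellLo : ∀ s, s ≤ 2 * δ lo → h s = 1 - |s - 2 * δ lo| := by
    intro s hs
    rw [cell_iff δ hmono h hge hex]
    refine ⟨fun j hj => absurd hj (not_lt.2 (hlole j)), fun j hj => ?_⟩
    linarith [dlo j]
  have cellHi : ∀ s, 2 * δ hi ≤ s → h s = 1 - |s - 2 * δ hi| := by
    intro s hs
    rw [cell_iff δ hmono h hge hex]
    refine ⟨fun j hj => ?_, fun j hj => absurd hj (not_lt.2 (hlehi j))⟩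
    linarith [dhi j]
  have ha : h (2 * δ lo - 1) = 0 := by
    rw [cellLo _ (by linarith), show 2 * δ lo - 1 - 2 * δ lo = -1 by ring]; norm_num
  have hb : h (2 * δ hi + 1) = 0 := by
    rw [cellHi _ (by linarith), show 2 * δ hi + 1 - 2 * δ hi = 1 by ring]; norm_num
  have hnn : ∀ s, 0 ≤ h s ↔ 2 * δ lo - 1 ≤ s ∧ s ≤ 2 * δ hi + 1 := by
    intro s
    constructor
    · intro hs
      obtain ⟨i, hi'⟩ := hex s
      have h1 : |s - 2 * δ i| ≤ 1 := by linarith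
      obtain ⟨h2, h3⟩ := abs_le.1 h1
      constructor <;> linarith [dlo i, dhi i]
    · rintro ⟨h1, h2⟩
      rcases h1.eq_or_lt with h1 | h1
      · rw [← h1, ha]
      · rcases h2.eq_or_lt with h2 | h2
        · rw [h2, hb]
        · exact (hpos s h1 h2).le
  have hSf : ∀ i, frontier (S i) = {p : ℝ × ℝ | |(p.1 - b.1) - (p.2 - b.2) - 1|
        = 1 - |(p.1 - b.1) + (p.2 - b.2) - 2 * δ i|} := by
    intro i
    rw [hS, aux_sq]
    exact aux_frontier b (fun s => 1 - |s - 2 * δ i|) (by fun_prop)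
  have hUf : frontier U = {p : ℝ × ℝ | |(p.1 - b.1) - (p.2 - b.2) - 1|
      = h ((p.1 - b.1) + (p.2 - b.2))} := by
    rw [← aux_frontier b h hc, hU]
    congr 1
    ext p
    simp only [Set.mem_iUnion, hS, aux_sq, Set.mem_ofPred_eq]
    constructor
    · rintro ⟨i, hi'⟩
      exact hi'.trans (hge _ i)
    · intro hp
      obtain ⟨i, hi'⟩ := hex ((p.1 - b.1) + (p.2 - b.2))
      exact ⟨i, by rw [← hi']; exact hp⟩
  have hUS : ∀ i, frontier U ∩ frontier (S i) =
      (fun s => FF b s (1 + (-1) * h s)) '' {s | 0 ≤ h s ∧ h s = 1 - |s - 2 * δ i|} ∪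
      (fun s => FF b s (1 + 1 * h s)) '' {s | 0 ≤ h s ∧ h s = 1 - |s - 2 * δ i|} := by
    intro i
    rw [hUf, hSf]
    have := arcs_eq b h (fun s => 1 - |s - 2 * δ i|)
    simp only [neg_mul, one_mul, ← sub_eq_add_neg]
    exact this
  have hconn := conn_arcs b δ hmono h hc hge hex _ _ hnn
  refine ⟨lo, hi, List.ofFn (fun j : Fin (k - 2) => (⟨j + 1, by omega⟩ : Fin k)), rfl, rfl,
    ?_, ?_, ?_, ?_, ?_, ?_, ?_⟩
  · apply List.Pairwise.isChain
    rw [List.pairwise_ofFn]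
    intro i j hij
    rw [Fin.lt_def] at hij ⊢
    simp only; omega
  · intro i
    rw [List.mem_ofFn]
    simp only [hlo, hhi, Set.mem_range, Fin.ext_iff, ne_eq]
    constructor
    · rintro ⟨j, hj⟩; omega
    · rintro ⟨h1, h2⟩
      have := i.2
      exact ⟨⟨i - 1, by omega⟩, by simp only; omega⟩
  · rw [hUf]
    simp only [hSf]
    apply bd_order k hk b δ hmono h hc hge hex (δ lo + δ hi) (δ hi - δ lo + 1) (by linarith)
      lo hi rfl rfl (by ring) (by ring)
    · intro s h1 h2; apply hpos <;> linarith
    · intro s; rw [hnn]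
      constructor <;> rintro ⟨h1, h2⟩ <;> constructor <;> linarith
    · rw [← ha]; congr 1; ring
    · rw [← hb]; congr 1; ring
    · simp; omega
    · intro i hi' hik
      simp only [List.get_eq_getElem, List.getElem_append, List.getElem_reverse,
        List.getElem_ofFn, List.length_append, List.length_ofFn, List.length_singleton,
        List.getElem_singleton]
      split_ifs <;> simp only [hlo, hhi] <;> omega
    · intro i hi' hik
      simp only [List.length_append, List.length_ofFn, List.length_singleton,
        List.length_reverse] at hi'
      simp only [List.get_eq_getElem, List.getElem_append, List.getElem_reverse,
        List.getElem_ofFn, List.length_append, List.length_ofFn, List.length_singleton,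
        List.getElem_singleton]
      split_ifs <;> simp only [hlo, hhi] <;> omega
  · rw [hUS]
    refine IsConnected.union ⟨FF b (2 * δ lo - 1) 1, ?_, ?_⟩ (hconn lo (-1)) (hconn lo 1)
    · exact ⟨2 * δ lo - 1, ⟨ha.ge, cellLo _ (by linarith)⟩, by simp [ha]⟩
    · exact ⟨2 * δ lo - 1, ⟨ha.ge, cellLo _ (by linarith)⟩, by simp [ha]⟩
  · rw [hUS]
    refine IsConnected.union ⟨FF b (2 * δ hi + 1) 1, ?_, ?_⟩ (hconn hi (-1)) (hconn hi 1)
    · exact ⟨2 * δ hi + 1, ⟨hb.ge, cellHi _ (by linarith)⟩, by simp [hb]⟩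
    · exact ⟨2 * δ hi + 1, ⟨hb.ge, cellHi _ (by linarith)⟩, by simp [hb]⟩
  · intro i hil hih
    have hil' : lo < i := lt_of_le_of_ne (hlole i) hil.symm
    have hih' : i < hi := lt_of_le_of_ne (hlehi i) hih
    have hp : ∀ s ∈ {s | 0 ≤ h s ∧ h s = 1 - |s - 2 * δ i|}, 0 < h s := by
      rintro s ⟨_, hs⟩
      rw [cell_iff δ hmono h hge hex] at hs
      have h1 := hs.1 lo hil'
      have h2 := hs.2 hi hih'
      have h3 := hmono hil'
      have h4 := hmono hih'
      apply hpos <;> linarith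
    have hc1 := hconn i (-1)
    have hc2 := hconn i 1
    rw [hUS]
    generalize hAA : (fun s => FF b s (1 + (-1) * h s)) '' {s | 0 ≤ h s ∧ h s = 1 - |s - 2 * δ i|}
      = AA at *
    generalize hBB : (fun s => FF b s (1 + 1 * h s)) '' {s | 0 ≤ h s ∧ h s = 1 - |s - 2 * δ i|}
      = BB at *
    have hA1 : ∀ p ∈ AA, (p.1 - b.1) - (p.2 - b.2) < 1 := by
      rw [← hAA]
      rintro _ ⟨s, hs, rfl⟩
      simp only
      rw [FF_d]; linarith [hp s hs]
    have hB1 : ∀ p ∈ BB, 1 < (p.1 - b.1) - (p.2 - b.2) := by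
      rw [← hBB]
      rintro _ ⟨s, hs, rfl⟩
      simp only
      rw [FF_d]; linarith [hp s hs]
    refine ⟨?_, AA, BB, hc1, hc2, ?_, rfl⟩
    · intro hpre
      obtain ⟨p, hp1⟩ := hc1.nonempty
      obtain ⟨q, hq1⟩ := hc2.nonempty
      obtain ⟨z, hz, hz1, hz2⟩ := hpre {p | (p.1 - b.1) - (p.2 - b.2) < 1}
        {p | 1 < (p.1 - b.1) - (p.2 - b.2)}
        (isOpen_lt (by fun_prop) (by fun_prop)) (isOpen_lt (by fun_prop) (by fun_prop))
        (by
          rintro x (hx | hx)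
          · exact Or.inl (hA1 x hx)
          · exact Or.inr (hB1 x hx))
        ⟨p, Or.inl hp1, hA1 p hp1⟩ ⟨q, Or.inr hq1, hB1 q hq1⟩
      simp only [Set.mem_ofPred_eq] at hz1 hz2
      exact lt_asymm hz1 hz2
    · rw [Set.disjoint_left]
      intro p h1 h2
      exact lt_asymm (hA1 p h1) (hB1 p h2)
  · have hk0 : (0 : ℝ) < (k : ℝ) + 1 := by positivity
    have hcast : ∀ i : Fin k, ((i : ℕ) : ℝ) < k := fun i => by exact_mod_cast i.2
    have hlt : ∀ i j : Fin k, (((i : ℕ) : ℝ) + 1) / ((k : ℝ) + 1) < (((j : ℕ) : ℝ) + 1) / ((k : ℝ) + 1)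
        ↔ i < j := by
      intro i j
      rw [div_lt_div_iff_of_pos_right hk0, add_lt_add_iff_right, Nat.cast_lt, Fin.lt_def]
    have hinj : ∀ i j : Fin k, (((i : ℕ) : ℝ) + 1) / ((k : ℝ) + 1) = (((j : ℕ) : ℝ) + 1) / ((k : ℝ) + 1)
        → i = j := by
      intro i j he
      rcases lt_trichotomy i j with h | h | h
      · exact absurd he ((hlt i j).2 h).ne
      · exact h
      · exact absurd he ((hlt j i).2 h).ne'
    refine ⟨fun n => if n = 0 then (0, 0) else if n = 1 then (0, 1) else if n = 2 then (1, 1)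
      else (1, 0), fun i => if i = lo ∨ i = hi then 1 else 0,
      fun i bb => if bb then 1 - (((i : ℕ) : ℝ) + 1) / ((k : ℝ) + 1)
        else (((i : ℕ) : ℝ) + 1) / ((k : ℝ) + 1), ?_, fun _ => rfl, ?_, ?_, ?_⟩
    · exact sq_cw
    · intro i bb
      have h1 : 0 < (((i : ℕ) : ℝ) + 1) / ((k : ℝ) + 1) := by positivity
      have h2 : (((i : ℕ) : ℝ) + 1) / ((k : ℝ) + 1) < 1 := by
        rw [div_lt_one hk0]; linarith [hcast i]
      cases bb
      · simp only [Bool.false_eq_true, if_false]; exact ⟨h1, h2⟩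
      · simp only [if_true]; constructor <;> linarith
    · intro i j hij _ bb he
      apply hij
      cases bb
      · simp only [Bool.false_eq_true, if_false] at he; exact hinj i j he
      · simp only [if_true] at he; exact hinj i j (by linarith)
    · intro i j _ _ _ _
      simp only [Bool.false_eq_true, if_false, if_true]
      refine ⟨hlt i j, ?_⟩
      rw [sub_lt_sub_iff_left]
      exact hlt j i

end Paper
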